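/- Let (X_i)_{i≥1} be i.i.d. standard normal, X_{(n)} = max_{1≤i≤n} X_i, and Y_n = a_n(X_{(n)} - b_n) with a_n = √(2 log n) and b_n = √(2 log n) - (log log n + log(4π))/(2√(2 log n)). Then the W₁ Wasserstein distance between the law of Y_n and the standard Gumbel distribution Λ satisfies W₁(L(Y_n), Λ) = ((log log n)²/(16 log n))(1 + o(1)) as n → ∞. -/

import Mathlib

open MeasureTheory Filter Real

/-- The standard normal cumulative distribution function. -/
noncomputable def stdNormalCDF (x : ℝ) : ℝ :=
  ∫ t in Set.Iic x, Real.exp (-t ^ 2 / 2) / Real.sqrt (2 * Real.pi)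

/-- The standard normal density. -/
noncomputable def stdNormalPDF (x : ℝ) : ℝ :=
  Real.exp (-x ^ 2 / 2) / Real.sqrt (2 * Real.pi)

/-- Scaling constant `a_n = √(2 log n)`. -/
noncomputable def aSeq (n : ℕ) : ℝ := Real.sqrt (2 * Real.log n)

/-- Centering constant
`b_n = √(2 log n) - (log log n + log (4π)) / (2 √(2 log n))`. -/
noncomputable def bSeq (n : ℕ) : ℝ :=
  aSeq n - (Real.log (Real.log n) + Real.log (4 * Real.pi)) / (2 * aSeq n)

/-- `c_n = log (√(4 π log n))`. -/
noncomputable def cSeq (n : ℕ) : ℝ := Real.log (Real.sqrt (4 * Real.pi * Real.log n))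

/-- The CDF of `Y_n = a_n (X_{(n)} - b_n)` where `X_{(n)}` is the maximum of `n`
i.i.d. standard normal random variables: `P(Y_n ≤ x) = Φ(b_n + x/a_n)^n`. -/
noncomputable def Fmax (n : ℕ) (x : ℝ) : ℝ := stdNormalCDF (bSeq n + x / aSeq n) ^ n

/-- The density of `Y_n = a_n (X_{(n)} - b_n)`:
`f_n(x) = n a_n⁻¹ φ(b_n + x/a_n) Φ(b_n + x/a_n)^{n-1}`. -/
noncomputable def fmax (n : ℕ) (x : ℝ) : ℝ :=
  n * (aSeq n)⁻¹ * stdNormalPDF (bSeq n + x / aSeq n) *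
    stdNormalCDF (bSeq n + x / aSeq n) ^ (n - 1)

/-- The density of the standard Gumbel distribution. -/
noncomputable def gumbelPDF (x : ℝ) : ℝ := Real.exp (-x - Real.exp (-x))

/-!
Let `r_n = (log log n)² / (16 log n)`, `u = b_n + x / a_n`, and let `p_n(x) = n P(X > u)` be the
mean number of exceedances of `u`. Integrating `φ(t) (1 + t⁻²)`, the derivative of `-φ(t) / t`,
over `(u, ∞)` bounds the Mills ratio on both sides, and gives
`p_n(x) = e^{-x} e^{-d² log n} / (1 + d) · (1 + O(u⁻²))`, where `d = (x - c_n) / (2 log n)`.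
Since `c_n ~ (log log n) / 2`, the term `d² log n ~ r_n` dominates, and
`p_n(x) = e^{-x} (1 - r_n + o(r_n))`. As `F_n = (1 - p_n / n)^n` differs from `e^{-p_n}` by
`O(p_n² / n)`, the quotient `(F_n - Λ) / r_n` converges pointwise to `e^{-x} Λ(x)`, the Gumbel
density. It is dominated by a multiple of `e^{-|x| / 2}`, so the integrals converge as well, and the
density is positive with integral `1`.
-/

open ProbabilityTheory Set
open scoped Topology

section StandardNormal

/-- The upper tail `P(X > u)` of a standard normal random variable. -/
noncomputable def stdNormalTail (u : ℝ) : ℝ := ∫ t in Ioi u, stdNormalPDF t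

/-- The Mills ratio of the standard normal distribution: its upper tail over its density. -/
noncomputable def millsRatio (u : ℝ) : ℝ := stdNormalTail u / stdNormalPDF u

lemma stdNormalPDF_eq_gaussianPDFReal : stdNormalPDF = gaussianPDFReal 0 1 := by
  ext t
  simp [stdNormalPDF, gaussianPDFReal, div_eq_inv_mul]

lemma stdNormalPDF_pos (u : ℝ) : 0 < stdNormalPDF u := by
  unfold stdNormalPDF
  positivity

lemma stdNormalPDF_neg (u : ℝ) : stdNormalPDF (-u) = stdNormalPDF u := by
  simp [stdNormalPDF]

lemma integrable_stdNormalPDF : Integrable stdNormalPDF :=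
  stdNormalPDF_eq_gaussianPDFReal ▸ integrable_gaussianPDFReal 0 1

lemma hasDerivAt_stdNormalPDF (t : ℝ) : HasDerivAt stdNormalPDF (-t * stdNormalPDF t) t := by
  have hexponent : HasDerivAt (fun t : ℝ => -t ^ 2 / 2) (-t) t :=
    ((hasDerivAt_pow 2 t).neg.div_const 2).congr_deriv (by
      rw [Nat.cast_ofNat, pow_one]
      ring)
  exact (hexponent.exp.div_const _).congr_deriv (by unfold stdNormalPDF; ring)

lemma stdNormalPDF_le_exp (u : ℝ) : stdNormalPDF u ≤ exp (-u ^ 2 / 2) := by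
  refine div_le_self (exp_pos _).le ?_
  rw [one_le_sqrt]
  linarith [pi_gt_three]

lemma tendsto_stdNormalPDF_atTop : Tendsto stdNormalPDF atTop (𝓝 0) := by
  have hexponent : Tendsto (fun x : ℝ => -x ^ 2 / 2) atTop atBot :=
    (tendsto_neg_atTop_atBot.comp (tendsto_pow_atTop two_ne_zero)).atBot_div_const two_pos
  exact zero_div √(2 * π) ▸ (tendsto_exp_atBot.comp hexponent).div_const √(2 * π)

lemma stdNormalCDF_eq_cdf : stdNormalCDF = cdf (gaussianReal 0 1) := by
  ext u
  change ∫ t in Iic u, stdNormalPDF t = _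
  have hnonneg : 0 ≤ ∫ t in Iic u, gaussianPDFReal 0 1 t :=
    integral_nonneg (gaussianPDFReal_nonneg 0 1)
  rw [cdf_eq_real, Measure.real, gaussianReal_apply_eq_integral 0 one_ne_zero,
    ENNReal.toReal_ofReal hnonneg, stdNormalPDF_eq_gaussianPDFReal]

lemma stdNormalCDF_nonneg (u : ℝ) : 0 ≤ stdNormalCDF u :=
  stdNormalCDF_eq_cdf ▸ cdf_nonneg _ u

lemma monotone_stdNormalCDF : Monotone stdNormalCDF :=
  stdNormalCDF_eq_cdf ▸ monotone_cdf _

lemma stdNormalCDF_eq_one_sub_tail (u : ℝ) : stdNormalCDF u = 1 - stdNormalTail u := by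
  have hsplit := integral_add_compl (measurableSet_Iic (a := u)) integrable_stdNormalPDF
  rw [compl_Iic, stdNormalPDF_eq_gaussianPDFReal, integral_gaussianPDFReal_eq_one 0 one_ne_zero,
    ← stdNormalPDF_eq_gaussianPDFReal] at hsplit
  exact eq_sub_of_add_eq hsplit

lemma stdNormalCDF_neg (u : ℝ) : stdNormalCDF (-u) = stdNormalTail u := by
  change ∫ t in Iic (-u), stdNormalPDF t = _
  simp_rw [stdNormalTail, ← integral_comp_neg_Ioi, stdNormalPDF_neg]

lemma stdNormalTail_nonneg (u : ℝ) : 0 ≤ stdNormalTail u :=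
  stdNormalCDF_neg u ▸ stdNormalCDF_nonneg _

lemma stdNormalTail_le_one (u : ℝ) : stdNormalTail u ≤ 1 := by
  linarith [stdNormalCDF_nonneg u, stdNormalCDF_eq_one_sub_tail u]

section Mills

variable {u : ℝ}

-- `t ↦ -φ(t) / t` is a primitive of the integrand, because `φ'(t) = -t φ(t)`.
lemma integral_stdNormalPDF_mul_one_add_inv_sq (hu : 0 < u) :
    IntegrableOn (fun t => stdNormalPDF t * (1 + (t ^ 2)⁻¹)) (Ioi u) ∧
      ∫ t in Ioi u, stdNormalPDF t * (1 + (t ^ 2)⁻¹) = stdNormalPDF u / u := by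
  have hderiv : ∀ t ∈ Ici u, HasDerivAt (fun t => -(stdNormalPDF t / t))
      (stdNormalPDF t * (1 + (t ^ 2)⁻¹)) t := by
    intro t ht
    have ht0 : t ≠ 0 := (hu.trans_le ht).ne'
    refine ((hasDerivAt_stdNormalPDF t).div (hasDerivAt_id t) ht0).neg.congr_deriv ?_
    simp only [id]
    field_simp
    ring
  have hlim : Tendsto (fun t => -(stdNormalPDF t / t)) atTop (𝓝 0) := by
    simpa [div_eq_mul_inv] using (tendsto_stdNormalPDF_atTop.mul tendsto_inv_atTop_zero).neg
  have hint := integrableOn_Ioi_deriv_of_nonneg' hderiv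
    (fun t _ => mul_nonneg (stdNormalPDF_pos t).le (by positivity)) hlim
  exact ⟨hint, by simp [integral_Ioi_of_hasDerivAt_of_tendsto' hderiv hint hlim]⟩

lemma mul_millsRatio_le_one (hu : 0 < u) : u * millsRatio u ≤ 1 := by
  obtain ⟨hint, heq⟩ := integral_stdNormalPDF_mul_one_add_inv_sq hu
  have htail : stdNormalTail u ≤ stdNormalPDF u / u := by
    rw [← heq]
    refine setIntegral_mono integrable_stdNormalPDF.integrableOn hint fun t => ?_
    exact le_mul_of_one_le_right (stdNormalPDF_pos t).le (le_add_of_nonneg_right (by positivity))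
  rw [millsRatio, ← mul_div_assoc, div_le_one (stdNormalPDF_pos u), mul_comm]
  exact (le_div_iff₀ hu).1 htail

lemma one_sub_inv_sq_le_mul_millsRatio (hu : 0 < u) :
    1 - (u ^ 2)⁻¹ ≤ u * millsRatio u := by
  obtain ⟨hint, heq⟩ := integral_stdNormalPDF_mul_one_add_inv_sq hu
  have htail : stdNormalPDF u / u ≤ stdNormalTail u * (1 + (u ^ 2)⁻¹) := by
    rw [← heq, stdNormalTail, ← integral_mul_const]
    refine setIntegral_mono_on hint (integrable_stdNormalPDF.integrableOn.mul_const _)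
      measurableSet_Ioi fun t (ht : u < t) => ?_
    have := stdNormalPDF_pos t
    gcongr
  have hφ := stdNormalPDF_pos u
  have hmills : 1 ≤ u * millsRatio u * (1 + (u ^ 2)⁻¹) := by
    rw [div_le_iff₀ hu] at htail
    rw [millsRatio, ← mul_div_assoc, div_mul_eq_mul_div, one_le_div hφ]
    linarith
  have hinv : 0 ≤ (u ^ 2)⁻¹ := by positivity
  linarith [mul_le_mul_of_nonneg_right (mul_millsRatio_le_one hu) hinv]

lemma stdNormalTail_le_exp (hu : 1 ≤ u) : stdNormalTail u ≤ exp (-u ^ 2 / 2) := by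
  have hmills : 0 ≤ millsRatio u := div_nonneg (stdNormalTail_nonneg u) (stdNormalPDF_pos u).le
  have hmills_le : millsRatio u ≤ 1 :=
    (le_mul_of_one_le_left hmills hu).trans (mul_millsRatio_le_one (by linarith))
  exact ((div_le_one (stdNormalPDF_pos u)).1 hmills_le).trans (stdNormalPDF_le_exp u)

end Mills

end StandardNormal

section Exponential

lemma exp_neg_sub_one_sub_pow_le {q : ℝ} (h0 : 0 ≤ q) (h1 : q ≤ 1) (n : ℕ) :
    exp (-(n * q)) - (1 - q) ^ n ≤ n * q ^ 2 * exp (-(n * q)) := by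
  have hexp : exp (-(n * q)) = exp (-q) ^ n := by
    rw [← exp_nat_mul]
    ring_nf
  have hsq : 0 ≤ 1 - q ^ 2 := by nlinarith
  have hbernoulli : 1 - n * q ^ 2 ≤ (1 - q ^ 2) ^ n := by
    simpa [sub_eq_add_neg] using one_add_mul_le_pow (a := -q ^ 2) (by linarith) n
  have hfactor : exp (-q) * (1 - q ^ 2) ≤ 1 - q :=
    calc exp (-q) * (1 - q ^ 2) = exp (-q) * (q + 1) * (1 - q) := by ring
      _ ≤ exp (-q) * exp q * (1 - q) := by
        gcongr
        exact add_one_le_exp q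
      _ = 1 - q := by rw [← exp_add, neg_add_cancel, exp_zero, one_mul]
  have hpow : exp (-q) ^ n * (1 - q ^ 2) ^ n ≤ (1 - q) ^ n := by
    rw [← mul_pow]
    exact pow_le_pow_left₀ (by positivity) hfactor n
  rw [hexp]
  linarith [mul_le_mul_of_nonneg_left hbernoulli (pow_nonneg (exp_pos (-q)).le n)]

lemma abs_exp_neg_sub_exp_neg_le {a b D : ℝ} (ha : exp (-a) ≤ D) (hb : exp (-b) ≤ D) :
    |exp (-a) - exp (-b)| ≤ |a - b| * D := by
  wlog hab : a ≤ b generalizing a b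
  · rw [abs_sub_comm, abs_sub_comm a]
    exact this hb ha (le_of_not_ge hab)
  have hexp : exp (-b) = exp (-a) * exp (-(b - a)) := by
    rw [← exp_add]
    ring_nf
  rw [abs_of_nonneg (sub_nonneg.2 (exp_le_exp.2 (neg_le_neg hab))), abs_sub_comm,
    abs_of_nonneg (sub_nonneg.2 hab)]
  calc exp (-a) - exp (-b) = (1 - exp (-(b - a))) * exp (-a) := by rw [hexp]; ring
    _ ≤ (b - a) * D :=
      mul_le_mul (by linarith [one_sub_le_exp_neg (b - a)]) ha (exp_pos _).le (by linarith)

lemma abs_exp_neg_div_one_add_mul_sub_one_le {s d m ε : ℝ} (hs : 0 ≤ s) (hd : -(1 / 2) ≤ d)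
    (hm_ge : 1 - ε ≤ m) (hm_le : m ≤ 1) :
    |exp (-s) / (1 + d) * m - 1| ≤ s + 2 * |d| + 2 * ε := by
  have hd0 : 0 < 1 + d := by linarith
  set E := exp (-s)
  have hE0 : 0 < E := exp_pos _
  have hE1 : E ≤ 1 := exp_le_one_iff.2 (by linarith)
  have hE_ge : 1 - s ≤ E := one_sub_le_exp_neg s
  set M := (1 + d)⁻¹ with hM
  have hM0 : 0 < M := inv_pos.2 hd0
  have hM2 : M ≤ 2 := inv_le_of_inv_le₀ two_pos (by linarith)
  have hM_sub : |E * (M - 1)| ≤ 2 * |d| := by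
    have : M - 1 = -(M * d) := by rw [hM]; field_simp; ring
    rw [this, abs_mul, abs_neg, abs_mul, abs_of_pos hE0, abs_of_pos hM0]
    calc E * (M * |d|) ≤ 1 * (2 * |d|) := by gcongr
      _ = 2 * |d| := one_mul _
  have hEM0 : 0 < E * M := mul_pos hE0 hM0
  have hEM2 : E * M ≤ 2 := by nlinarith
  obtain ⟨hM_lower, hM_upper⟩ := abs_le.1 hM_sub
  rw [div_eq_mul_inv, ← hM, abs_le]
  constructor <;> nlinarith

lemma exp_neg_le_factorial_mul_pow {c t y : ℝ} (hc : 0 < c) (h : exp y / c ≤ t) (k : ℕ) :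
    exp (-t) ≤ k.factorial * c ^ k * exp (-(k * y)) := by
  have ht : 0 < t := (div_pos (exp_pos y) hc).trans_le h
  have hpow : exp (k * y) / c ^ k ≤ exp t * k.factorial :=
    calc exp (k * y) / c ^ k = (exp y / c) ^ k := by rw [div_pow, exp_nat_mul]
      _ ≤ t ^ k := by gcongr
      _ ≤ exp t * k.factorial :=
        (div_le_iff₀ (by positivity)).1 (pow_div_factorial_le_exp t ht.le k)
  rw [div_le_iff₀ (by positivity)] at hpow
  rw [exp_neg, exp_neg, ← div_eq_mul_inv, inv_eq_one_div, div_le_div_iff₀ (exp_pos _) (exp_pos _)]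
  linarith

lemma one_add_sq_mul_exp_neg_abs_le (x : ℝ) :
    (1 + x ^ 2) * exp (-|x|) ≤ 8 * exp (-|x| / 2) := by
  have hquad := quadratic_le_exp_of_nonneg (x := |x| / 2) (by positivity)
  have hpoly : 1 + x ^ 2 ≤ 8 * exp (|x| / 2) := by
    rw [div_pow, sq_abs] at hquad
    linarith [abs_nonneg x]
  calc (1 + x ^ 2) * exp (-|x|) ≤ 8 * exp (|x| / 2) * exp (-|x|) := by gcongr
    _ = 8 * exp (-|x| / 2) := by rw [mul_assoc, ← exp_add]; ring_nf

lemma sq_le_exp {y : ℝ} (hy : 0 ≤ y) : y ^ 2 ≤ exp y := by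
  have hquad := quadratic_le_exp_of_nonneg (x := y / 2) (by positivity)
  have hhalf : y ≤ exp (y / 2) := by nlinarith [sq_nonneg (y - 2)]
  calc y ^ 2 ≤ exp (y / 2) ^ 2 := by gcongr
    _ = exp y := by rw [← exp_nat_mul]; ring_nf

lemma integrable_exp_neg_abs_div_two : Integrable fun x : ℝ => exp (-|x| / 2) := by
  refine .of_integral_ne_zero ?_
  rw [integral_comp_abs (f := fun x => exp (-x / 2))]
  simp_rw [neg_div, div_eq_inv_mul, ← neg_mul]
  rw [integral_exp_mul_Ioi (by norm_num)]
  norm_num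

lemma tendsto_sub_div_of_hasDerivAt {α : Type*} {l : Filter α} {f : ℝ → ℝ} {f' a v : ℝ}
    {u r : α → ℝ} (hf : HasDerivAt f f' a) (hu : Tendsto u l (𝓝 a))
    (hur : Tendsto (fun i => (u i - a) / r i) l (𝓝 v)) :
    Tendsto (fun i => (f (u i) - f a) / r i) l (𝓝 (f' * v)) := by
  have hlim := hf.hasFDerivAt.hasFDerivWithinAt (s := univ) |>.lim (c := fun i => (r i)⁻¹)
    (d := fun i => u i - a) (l := l) (v := v) (by simpa using hu.sub_const a)
    (by simp) (by simpa [div_eq_inv_mul] using hur)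
  simpa [div_eq_inv_mul, mul_comm] using hlim

lemma tendsto_of_tendsto_sub_div {α : Type*} {l : Filter α} {a v : ℝ} {u r : α → ℝ}
    (hr : Tendsto r l (𝓝 0)) (hr0 : ∀ᶠ i in l, r i ≠ 0)
    (hur : Tendsto (fun i => (u i - a) / r i) l (𝓝 v)) : Tendsto u l (𝓝 a) := by
  have hlim := (hur.mul hr).add_const a
  rw [mul_zero, zero_add] at hlim
  refine hlim.congr' ?_
  filter_upwards [hr0] with i hi
  rw [div_mul_cancel₀ _ hi, sub_add_cancel]

lemma tendsto_mul_sub_one_div {α : Type*} {l : Filter α} {v w : ℝ} {f g r : α → ℝ}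
    (hf : Tendsto f l (𝓝 1)) (hfr : Tendsto (fun i => (f i - 1) / r i) l (𝓝 v))
    (hgr : Tendsto (fun i => (g i - 1) / r i) l (𝓝 w)) :
    Tendsto (fun i => (f i * g i - 1) / r i) l (𝓝 (v + w)) := by
  have hlim := hfr.add (hf.mul hgr)
  rw [one_mul] at hlim
  exact hlim.congr fun i => by ring

end Exponential

section Gumbel

/-- The cumulative distribution function `Λ` of the standard Gumbel distribution. -/
noncomputable def gumbelCDF (x : ℝ) : ℝ := exp (-exp (-x))

lemma gumbelPDF_eq_mul_gumbelCDF (x : ℝ) : gumbelPDF x = exp (-x) * gumbelCDF x := by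
  rw [gumbelPDF, gumbelCDF, ← exp_add, sub_eq_add_neg]

lemma gumbelPDF_le_exp_neg_abs_div_two (x : ℝ) : gumbelPDF x ≤ exp (-|x| / 2) := by
  refine exp_le_exp.2 ?_
  rcases le_total 0 x with hx | hx
  · rw [abs_of_nonneg hx]
    linarith [exp_pos (-x)]
  · rw [abs_of_nonpos hx]
    nlinarith [quadratic_le_exp_of_nonneg (neg_nonneg.2 hx), sq_nonneg (-x - 1)]

lemma hasDerivAt_gumbelCDF (x : ℝ) : HasDerivAt gumbelCDF (gumbelPDF x) x :=
  (hasDerivAt_neg x).exp.neg.exp.congr_deriv (by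
    rw [gumbelPDF_eq_mul_gumbelCDF, gumbelCDF, Pi.neg_apply]
    ring)

lemma measurable_gumbelCDF : Measurable gumbelCDF := by
  unfold gumbelCDF
  fun_prop

lemma integrable_gumbelPDF : Integrable gumbelPDF := by
  refine integrable_exp_neg_abs_div_two.mono' ?_ (.of_forall fun x => ?_)
  · unfold gumbelPDF
    fun_prop
  · rw [gumbelPDF, norm_of_nonneg (exp_pos _).le]
    exact gumbelPDF_le_exp_neg_abs_div_two x

lemma integral_gumbelPDF : ∫ x, gumbelPDF x = 1 := by
  have hbot : Tendsto gumbelCDF atBot (𝓝 0) :=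
    tendsto_exp_atBot.comp <| tendsto_neg_atTop_atBot.comp <|
      tendsto_exp_atTop.comp tendsto_neg_atBot_atTop
  have htop : Tendsto gumbelCDF atTop (𝓝 (exp (-0))) :=
    (tendsto_exp_atBot.comp tendsto_neg_atTop_atBot).neg.rexp
  rw [integral_of_hasDerivAt_of_tendsto hasDerivAt_gumbelCDF integrable_gumbelPDF hbot htop]
  norm_num

end Gumbel

section LeftDecay

/-- The constant in `leftDecay`. It comes from `exp (-t) ≤ 48! / t ^ 48` with `t = e^{-x/16} / 6`,
where `48 / 16 = 3` is the decay rate; only its independence of `n` and `x` matters. -/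
noncomputable def leftDecayConst : ℝ := Nat.factorial 48 * 6 ^ 48

/-- A multiple of `e^{3x}` for `x ≤ 0`, extended by a constant to `x ≥ 0`: the common bound for the
distribution functions near `-∞`. -/
noncomputable def leftDecay (x : ℝ) : ℝ := leftDecayConst * exp (3 * min x 0)

lemma one_le_leftDecayConst : 1 ≤ leftDecayConst :=
  one_le_mul_of_one_le_of_one_le (by exact_mod_cast Nat.factorial_pos 48) (by norm_num)

lemma leftDecayConst_pos : 0 < leftDecayConst := one_pos.trans_le one_le_leftDecayConst

lemma leftDecay_pos (x : ℝ) : 0 < leftDecay x := mul_pos leftDecayConst_pos (exp_pos _)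

lemma exp_neg_le_leftDecay {t x : ℝ} (ht : 0 ≤ t) (h : x ≤ 0 → exp (-x / 16) / 6 ≤ t) :
    exp (-t) ≤ leftDecay x := by
  rcases le_total x 0 with hx | hx
  · refine (exp_neg_le_factorial_mul_pow (by norm_num) (h hx) 48).trans_eq ?_
    rw [leftDecay, leftDecayConst, min_eq_left hx]
    congr 2
    push_cast
    ring
  · rw [leftDecay, min_eq_right hx, mul_zero, exp_zero, mul_one]
    exact (exp_le_one_iff.2 (neg_nonpos.2 ht)).trans one_le_leftDecayConst

lemma gumbelCDF_le_leftDecay (x : ℝ) : gumbelCDF x ≤ leftDecay x := by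
  refine exp_neg_le_leftDecay (exp_pos _).le fun hx => ?_
  have hmono : exp (-x / 16) ≤ exp (-x) := exp_le_exp.2 (by linarith)
  linarith [exp_pos (-x)]

lemma exp_neg_mul_leftDecay_le (x : ℝ) :
    exp (-x) * leftDecay x ≤ leftDecayConst * exp (-|x|) := by
  rw [leftDecay, mul_left_comm, ← exp_add]
  gcongr
  · exact leftDecayConst_pos.le
  · rcases le_total x 0 with hx | hx
    · rw [abs_of_nonpos hx, min_eq_left hx]
      linarith
    · rw [abs_of_nonneg hx, min_eq_right hx]
      linarith

lemma exp_neg_sq_mul_leftDecay_le (x : ℝ) :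
    exp (-x) ^ 2 * leftDecay x ≤ leftDecayConst * exp (-|x|) := by
  rw [leftDecay, mul_left_comm, ← exp_nat_mul, ← exp_add]
  push_cast
  gcongr
  · exact leftDecayConst_pos.le
  · rcases le_total x 0 with hx | hx
    · rw [abs_of_nonpos hx, min_eq_left hx]
      linarith
    · rw [abs_of_nonneg hx, min_eq_right hx]
      linarith

end LeftDecay

section Normalization

variable {n : ℕ} {x : ℝ}

/-- The level for which `Y_n ≤ x` means `X_{(n)} ≤ level n x`. -/
noncomputable def level (n : ℕ) (x : ℝ) : ℝ := bSeq n + x / aSeq n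

/-- The relative displacement of `level n x` from `a_n`. -/
noncomputable def relShift (n : ℕ) (x : ℝ) : ℝ := (x - cSeq n) / (2 * log n)

/-- The claimed first-order equivalent of the Wasserstein distance. -/
noncomputable def gumbelRate (n : ℕ) : ℝ := log (log n) ^ 2 / (16 * log n)

lemma log_natCast_pos_of_loglog (hn : 4 ≤ log (log n)) : 0 < log n := by
  refine (log_natCast_nonneg n).lt_of_ne fun h => ?_
  rw [← h, log_zero] at hn
  norm_num at hn

lemma loglog_sq_le_log (hn : 4 ≤ log (log n)) : log (log n) ^ 2 ≤ log n :=
  (sq_le_exp (by linarith)).trans_eq (exp_log (log_natCast_pos_of_loglog hn))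

lemma sixteen_le_log (hn : 4 ≤ log (log n)) : 16 ≤ log n := by
  nlinarith [loglog_sq_le_log hn]

lemma natCast_pos_of_log_pos (hL : 0 < log n) : (0 : ℝ) < n :=
  Nat.cast_pos.2 (Nat.pos_of_ne_zero (by rintro rfl; simp at hL))

lemma sixteen_mul_log_le (hn : 4 ≤ log (log n)) : 16 * log n ≤ n := by
  have hL := sixteen_le_log hn
  have hsq := sq_le_exp (y := log n) (by linarith)
  rw [exp_log (natCast_pos_of_log_pos (by linarith))] at hsq
  nlinarith

lemma aSeq_sq (n : ℕ) : aSeq n ^ 2 = 2 * log n :=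
  sq_sqrt (mul_nonneg two_pos.le (log_natCast_nonneg n))

lemma aSeq_pos (hL : 0 < log n) : 0 < aSeq n := sqrt_pos.2 (by positivity)

lemma cSeq_eq (hL : 0 < log n) : cSeq n = (log (log n) + log (4 * π)) / 2 := by
  rw [cSeq, log_sqrt (by positivity), log_mul (by positivity) hL.ne', add_comm]

lemma exp_cSeq (hL : 0 < log n) : exp (cSeq n) = aSeq n * √(2 * π) := by
  rw [cSeq, exp_log (by positivity), aSeq, ← sqrt_mul (by positivity)]
  ring_nf

lemma loglog_div_two_le_cSeq (hL : 0 < log n) : log (log n) / 2 ≤ cSeq n := by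
  have hπ : 0 ≤ log (4 * π) := log_nonneg (by linarith [pi_gt_three])
  rw [cSeq_eq hL]
  linarith

lemma cSeq_le_loglog (hn : 4 ≤ log (log n)) : cSeq n ≤ log (log n) := by
  have hπ : log (4 * π) ≤ 4 := by
    rw [log_le_iff_le_exp (by positivity)]
    have := sq_le_exp (y := 4) (by norm_num)
    linarith [pi_le_four]
  rw [cSeq_eq (log_natCast_pos_of_loglog hn)]
  linarith

lemma level_eq_mul (hL : 0 < log n) (x : ℝ) : level n x = aSeq n * (1 + relShift n x) := by
  have ha := aSeq_pos hL
  have hc : log (log n) + log (4 * π) = 2 * cSeq n := by rw [cSeq_eq hL]; ring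
  rw [level, bSeq, hc, relShift, ← aSeq_sq]
  field_simp
  ring

lemma Fmax_eq (n : ℕ) (x : ℝ) : Fmax n x = (1 - stdNormalTail (level n x)) ^ n := by
  rw [Fmax, stdNormalCDF_eq_one_sub_tail, level]

lemma neg_half_le_relShift (hn : 4 ≤ log (log n)) (hx : -log n / 2 ≤ x) :
    -(1 / 2) ≤ relShift n x := by
  have hL := sixteen_le_log hn
  rw [relShift, le_div_iff₀ (by linarith)]
  nlinarith [cSeq_le_loglog hn, loglog_sq_le_log hn]

lemma level_pos (hn : 4 ≤ log (log n)) (hx : -log n / 2 ≤ x) : 0 < level n x := by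
  have hL := log_natCast_pos_of_loglog hn
  rw [level_eq_mul hL]
  exact mul_pos (aSeq_pos hL) (by linarith [neg_half_le_relShift hn hx])

lemma inv_level_sq_le (hn : 4 ≤ log (log n)) (hx : -log n / 2 ≤ x) :
    (level n x ^ 2)⁻¹ ≤ 2 / log n := by
  have hL := log_natCast_pos_of_loglog hn
  rw [← inv_div, level_eq_mul hL, mul_pow, aSeq_sq]
  refine inv_anti₀ (by positivity) ?_
  have hsq : 1 / 4 ≤ (1 + relShift n x) ^ 2 := by nlinarith [neg_half_le_relShift hn hx]
  nlinarith

lemma gumbelRate_pos (hn : 4 ≤ log (log n)) : 0 < gumbelRate n := by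
  have hL := log_natCast_pos_of_loglog hn
  unfold gumbelRate
  positivity

lemma inv_log_le_gumbelRate (hn : 4 ≤ log (log n)) : (log n)⁻¹ ≤ gumbelRate n := by
  have hL := log_natCast_pos_of_loglog hn
  have hl : 16 ≤ log (log n) ^ 2 := by nlinarith
  rw [gumbelRate, inv_eq_one_div, div_le_div_iff₀ hL (by positivity), one_mul]
  exact mul_le_mul_of_nonneg_right hl hL.le

lemma inv_natCast_le_gumbelRate_div (hn : 4 ≤ log (log n)) :
    (n : ℝ)⁻¹ ≤ gumbelRate n / log (log n) ^ 2 := by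
  have hL := log_natCast_pos_of_loglog hn
  have hrate : gumbelRate n / log (log n) ^ 2 = (16 * log n)⁻¹ := by
    rw [gumbelRate]
    field_simp
  rw [hrate]
  exact inv_anti₀ (by positivity) (sixteen_mul_log_le hn)

lemma inv_natCast_le_gumbelRate (hn : 4 ≤ log (log n)) : (n : ℝ)⁻¹ ≤ gumbelRate n :=
  (inv_natCast_le_gumbelRate_div hn).trans
    (div_le_self (gumbelRate_pos hn).le (one_le_pow₀ (by linarith)))

lemma abs_relShift_le (hn : 4 ≤ log (log n)) (x : ℝ) :
    |relShift n x| ≤ 3 * (1 + x ^ 2) * gumbelRate n := by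
  have hL := log_natCast_pos_of_loglog hn
  set l := log (log n)
  have hx : |x - cSeq n| ≤ |x| + l := by
    have hc0 : 0 ≤ cSeq n := by linarith [loglog_div_two_le_cSeq hL]
    calc |x - cSeq n| ≤ |x| + |cSeq n| := abs_sub x _
      _ ≤ |x| + l := by
        rw [abs_of_nonneg hc0]
        gcongr
        exact cSeq_le_loglog hn
  have hquad : 2 * |x| ≤ 1 + x ^ 2 := by nlinarith [sq_nonneg (|x| - 1), sq_abs x]
  have hl2 : 4 * l ≤ l ^ 2 := by nlinarith
  have hmain : 8 * (|x| + l) ≤ 3 * (1 + x ^ 2) * l ^ 2 := by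
    nlinarith [mul_le_mul_of_nonneg_right hquad (sq_nonneg l), sq_nonneg x,
      mul_nonneg (sq_nonneg x) (sq_nonneg l), abs_nonneg x]
  rw [relShift, gumbelRate, abs_div, abs_of_pos (by positivity : 0 < 2 * log n), ← mul_div_assoc,
    div_le_div_iff₀ (by positivity) (by positivity)]
  nlinarith

lemma log_mul_relShift_sq (hL : 0 < log n) (x : ℝ) :
    log n * relShift n x ^ 2 = (x - cSeq n) ^ 2 / (4 * log n) := by
  rw [relShift]
  field_simp
  ring

lemma log_mul_relShift_sq_le (hn : 4 ≤ log (log n)) (x : ℝ) :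
    log n * relShift n x ^ 2 ≤ 8 * (1 + x ^ 2) * gumbelRate n := by
  have hL := log_natCast_pos_of_loglog hn
  set l := log (log n)
  have hc : cSeq n ^ 2 ≤ l ^ 2 :=
    pow_le_pow_left₀ (by linarith [loglog_div_two_le_cSeq hL]) (cSeq_le_loglog hn) 2
  have hmain : 4 * (x - cSeq n) ^ 2 ≤ 8 * (1 + x ^ 2) * l ^ 2 := by
    have hl1 : 1 ≤ l ^ 2 := one_le_pow₀ (by linarith)
    nlinarith [sq_nonneg (x + cSeq n), mul_nonneg (sq_nonneg x) (sub_nonneg.2 hl1)]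
  rw [log_mul_relShift_sq hL, gumbelRate, ← mul_div_assoc,
    div_le_div_iff₀ (by positivity) (by positivity)]
  nlinarith

end Normalization

section Exceedances

variable {n : ℕ} {x : ℝ}

/-- The ratio of `n φ(u) / u`, the leading term of the mean number of exceedances of
`u = level n x`, to its limit `e^{-x}`. -/
noncomputable def tailCorrection (n : ℕ) (x : ℝ) : ℝ :=
  exp (-(log n * relShift n x ^ 2)) / (1 + relShift n x)

/-- The expected number of the `n` normal variables that exceed `level n x`. -/
noncomputable def meanExceedances (n : ℕ) (x : ℝ) : ℝ := n * stdNormalTail (level n x)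

lemma meanExceedances_nonneg (n : ℕ) (x : ℝ) : 0 ≤ meanExceedances n x :=
  mul_nonneg n.cast_nonneg (stdNormalTail_nonneg _)

lemma natCast_mul_stdNormalPDF_level_div (hL : 0 < log n) (x : ℝ) :
    n * (stdNormalPDF (level n x) / level n x) = exp (-x) * tailCorrection n x := by
  have hn := natCast_pos_of_log_pos hL
  have hexponent : -level n x ^ 2 / 2 =
      -x + cSeq n + -(log n * relShift n x ^ 2) - log n := by
    rw [level_eq_mul hL, mul_pow, aSeq_sq, relShift]
    field_simp
    ring
  have hsqrt : √(2 * π) ≠ 0 := by positivity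
  have ha := (aSeq_pos hL).ne'
  rw [stdNormalPDF, hexponent, exp_sub, exp_add, exp_add, exp_cSeq hL, exp_log hn, level_eq_mul hL,
    tailCorrection, ← mul_div_mul_left _ (1 + relShift n x) hn.ne']
  field_simp

lemma meanExceedances_eq (hn : 4 ≤ log (log n)) (hx : -log n / 2 ≤ x) :
    meanExceedances n x =
      exp (-x) * (tailCorrection n x * (level n x * millsRatio (level n x))) := by
  have hu := (level_pos hn hx).ne'
  have hφ := (stdNormalPDF_pos (level n x)).ne'
  rw [← mul_assoc, ← natCast_mul_stdNormalPDF_level_div (log_natCast_pos_of_loglog hn),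
    meanExceedances, millsRatio]
  field_simp

lemma one_sub_two_div_log_le_mul_millsRatio (hn : 4 ≤ log (log n)) (hx : -log n / 2 ≤ x) :
    1 - 2 / log n ≤ level n x * millsRatio (level n x) := by
  linarith [one_sub_inv_sq_le_mul_millsRatio (level_pos hn hx), inv_level_sq_le hn hx]

lemma abs_meanExceedances_sub_le (hn : 4 ≤ log (log n)) (hx : -log n / 2 ≤ x) :
    |meanExceedances n x - exp (-x)| ≤ 18 * (1 + x ^ 2) * gumbelRate n * exp (-x) := by
  have hL := log_natCast_pos_of_loglog hn
  have hrel := abs_exp_neg_div_one_add_mul_sub_one_le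
    (mul_nonneg hL.le (sq_nonneg (relShift n x))) (neg_half_le_relShift hn hx)
    (one_sub_two_div_log_le_mul_millsRatio hn hx) (mul_millsRatio_le_one (level_pos hn hx))
  have hinv : 2 / log n ≤ 2 * gumbelRate n := by
    rw [div_eq_mul_inv]
    gcongr
    exact inv_log_le_gumbelRate hn
  have hrate : gumbelRate n ≤ (1 + x ^ 2) * gumbelRate n :=
    le_mul_of_one_le_left (gumbelRate_pos hn).le (by linarith [sq_nonneg x])
  rw [meanExceedances_eq hn hx, ← mul_sub_one, abs_mul, abs_of_pos (exp_pos _),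
    mul_comm _ (exp (-x)), tailCorrection]
  gcongr
  linarith [abs_relShift_le hn x, log_mul_relShift_sq_le hn x]

lemma meanExceedances_le (hn : 4 ≤ log (log n)) (hx : -log n / 2 ≤ x) :
    meanExceedances n x ≤ 2 * exp (-x) := by
  have hL := log_natCast_pos_of_loglog hn
  have hd := neg_half_le_relShift hn hx
  have hcorrection : tailCorrection n x ≤ 2 := by
    rw [tailCorrection, div_le_iff₀ (by linarith)]
    have hexp : exp (-(log n * relShift n x ^ 2)) ≤ 1 :=
      exp_le_one_iff.2 (neg_nonpos.2 (by positivity))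
    linarith
  rw [meanExceedances_eq hn hx, mul_comm]
  gcongr
  have hnonneg : 0 ≤ tailCorrection n x := div_nonneg (exp_pos _).le (by linarith)
  exact (mul_le_of_le_one_right hnonneg (mul_millsRatio_le_one (level_pos hn hx))).trans hcorrection

lemma exp_half_sub_one_le_tailCorrection (hn : 4 ≤ log (log n)) (hx : -log n / 2 ≤ x)
    (hx0 : x ≤ 0) : exp (x / 2 - 1) ≤ tailCorrection n x := by
  have hL := log_natCast_pos_of_loglog hn
  have hc0 : 0 ≤ cSeq n := by linarith [loglog_div_two_le_cSeq hL]
  have hd0 : relShift n x ≤ 0 := div_nonpos_of_nonpos_of_nonneg (by linarith) (by positivity)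
  have hexponent : log n * relShift n x ^ 2 ≤ -x / 2 + 1 := by
    rw [log_mul_relShift_sq hL, div_le_iff₀ (by positivity)]
    have hcL : cSeq n ^ 2 ≤ log n :=
      (pow_le_pow_left₀ hc0 (cSeq_le_loglog hn) 2).trans (loglog_sq_le_log hn)
    nlinarith [sq_nonneg (x + cSeq n)]
  rw [tailCorrection, le_div_iff₀ (by linarith [neg_half_le_relShift hn hx])]
  calc exp (x / 2 - 1) * (1 + relShift n x) ≤ exp (x / 2 - 1) :=
        mul_le_of_le_one_right (exp_pos _).le (by linarith)
    _ ≤ exp (-(log n * relShift n x ^ 2)) := exp_le_exp.2 (by linarith)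

lemma exp_half_div_six_le_meanExceedances (hn : 4 ≤ log (log n)) (hx : -log n / 2 ≤ x)
    (hx0 : x ≤ 0) : exp (-x / 2) / 6 ≤ meanExceedances n x := by
  have hmills : 1 / 2 ≤ level n x * millsRatio (level n x) := by
    refine le_trans ?_ (one_sub_two_div_log_le_mul_millsRatio hn hx)
    have : 2 / log n ≤ 1 / 2 := by
      rw [div_le_div_iff₀ (log_natCast_pos_of_loglog hn) two_pos]
      linarith [sixteen_le_log hn]
    linarith
  have hexp : 1 / 3 ≤ exp (-1) := by
    rw [exp_neg, one_div]
    exact inv_anti₀ (exp_pos 1) exp_one_lt_three.le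
  calc exp (-x / 2) / 6 = exp (-x / 2) * (1 / 3) * (1 / 2) := by ring
    _ ≤ exp (-x / 2) * exp (-1) * (1 / 2) := by gcongr
    _ = exp (-x) * (exp (x / 2 - 1) * (1 / 2)) := by
      rw [← mul_assoc, ← exp_add, ← exp_add]
      ring_nf
    _ ≤ exp (-x) * (tailCorrection n x * (level n x * millsRatio (level n x))) := by
      have hcorrection := exp_half_sub_one_le_tailCorrection hn hx hx0
      have := (exp_pos _).le.trans hcorrection
      gcongr
    _ = meanExceedances n x := (meanExceedances_eq hn hx).symm

lemma Fmax_nonneg (n : ℕ) (x : ℝ) : 0 ≤ Fmax n x := pow_nonneg (stdNormalCDF_nonneg _) n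

lemma monotone_Fmax (n : ℕ) : Monotone (Fmax n) := fun x y hxy => by
  have ha : 0 ≤ aSeq n := sqrt_nonneg _
  refine pow_le_pow_left₀ (stdNormalCDF_nonneg _) (monotone_stdNormalCDF ?_) n
  gcongr

lemma Fmax_le_exp_neg_meanExceedances (n : ℕ) (x : ℝ) :
    Fmax n x ≤ exp (-meanExceedances n x) := by
  rw [Fmax_eq, meanExceedances, ← mul_neg, exp_nat_mul]
  exact pow_le_pow_left₀ (sub_nonneg.2 (stdNormalTail_le_one _)) (one_sub_le_exp_neg _) n

lemma exp_neg_meanExceedances_sub_Fmax_le (n : ℕ) (x : ℝ) :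
    exp (-meanExceedances n x) - Fmax n x ≤
      meanExceedances n x ^ 2 * exp (-meanExceedances n x) * (n : ℝ)⁻¹ := by
  rcases eq_or_ne n 0 with rfl | hn
  · simp [Fmax, meanExceedances]
  have hpow := exp_neg_sub_one_sub_pow_le (stdNormalTail_nonneg (level n x))
    (stdNormalTail_le_one _) n
  rw [Fmax_eq]
  refine hpow.trans_eq ?_
  unfold meanExceedances
  field_simp

end Exceedances

section Domination

variable {n : ℕ} {x : ℝ}

lemma exp_neg_meanExceedances_le_leftDecay (hn : 4 ≤ log (log n)) (hx : -log n / 2 ≤ x) :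
    exp (-meanExceedances n x) ≤ leftDecay x := by
  refine exp_neg_le_leftDecay (meanExceedances_nonneg n x) fun hx0 => ?_
  have hexp : exp (-x / 16) ≤ exp (-x / 2) := exp_le_exp.2 (by linarith)
  linarith [exp_half_div_six_le_meanExceedances hn hx hx0]

lemma Fmax_le_exp_three_mul (hn : 4 ≤ log (log n)) (hx : x ≤ -4 * log n) :
    Fmax n x ≤ exp (3 * x) := by
  have hL16 := sixteen_le_log hn
  have hL : 0 < log n := by linarith
  set v := -level n x with hv
  have ha : 1 ≤ aSeq n := one_le_sqrt.2 (by linarith)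
  have hratio : 1 ≤ -x / (4 * log n) := (one_le_div (by positivity)).2 (by linarith)
  have hv_ge : aSeq n * (-x / (4 * log n)) ≤ v := by
    have hc0 : 0 ≤ cSeq n := by linarith [loglog_div_two_le_cSeq hL]
    have hd : -(1 + relShift n x) =
        2 * (-x / (4 * log n)) + cSeq n / (2 * log n) - 1 := by
      rw [relShift]
      field_simp
      ring
    rw [hv, level_eq_mul hL, ← mul_neg, hd]
    gcongr
    linarith [div_nonneg hc0 (by positivity : 0 ≤ 2 * log n)]
  have hv1 : 1 ≤ v := (one_le_mul_of_one_le_of_one_le ha hratio).trans hv_ge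
  have hv_sq : x ^ 2 ≤ n * (v ^ 2 / 2) :=
    calc x ^ 2 = 16 * log n * ((aSeq n * (-x / (4 * log n))) ^ 2 / 2) := by
          rw [mul_pow, aSeq_sq]
          field_simp
          ring
      _ ≤ n * (v ^ 2 / 2) := by
        gcongr
        exact sixteen_mul_log_le hn
  calc Fmax n x = stdNormalTail v ^ n := by rw [hv, ← stdNormalCDF_neg, neg_neg]; rfl
    _ ≤ exp (-v ^ 2 / 2) ^ n := by
      gcongr
      exacts [stdNormalTail_nonneg v, stdNormalTail_le_exp hv1]
    _ = exp (-(n * (v ^ 2 / 2))) := by rw [← exp_nat_mul]; ring_nf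
    _ ≤ exp (3 * x) := exp_le_exp.2 (by nlinarith)

lemma Fmax_le_leftDecay (hn : 4 ≤ log (log n)) (hx : x ≤ -log n / 2) :
    Fmax n x ≤ leftDecay x := by
  have hL := sixteen_le_log hn
  rcases le_total x (-4 * log n) with hfar | hmid
  · rw [leftDecay, min_eq_left (by linarith)]
    exact (Fmax_le_exp_three_mul hn hfar).trans
      (le_mul_of_one_le_left (exp_pos _).le one_le_leftDecayConst)
  · refine (monotone_Fmax n hx).trans ((Fmax_le_exp_neg_meanExceedances n _).trans ?_)
    refine exp_neg_le_leftDecay (meanExceedances_nonneg n _) fun _ => ?_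
    have hexp : exp (-x / 16) ≤ exp (-(-log n / 2) / 2) := exp_le_exp.2 (by linarith)
    linarith [exp_half_div_six_le_meanExceedances hn le_rfl (by linarith)]

lemma abs_Fmax_sub_exp_neg_meanExceedances_le (hn : 4 ≤ log (log n)) (hx : -log n / 2 ≤ x) :
    |Fmax n x - exp (-meanExceedances n x)| ≤
      4 * leftDecayConst * gumbelRate n * exp (-|x|) := by
  have hrate := gumbelRate_pos hn
  have hp0 := meanExceedances_nonneg n x
  have hD0 := leftDecay_pos x
  rw [abs_sub_comm, abs_of_nonneg (sub_nonneg.2 (Fmax_le_exp_neg_meanExceedances n x))]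
  calc _ ≤ meanExceedances n x ^ 2 * exp (-meanExceedances n x) * (n : ℝ)⁻¹ :=
        exp_neg_meanExceedances_sub_Fmax_le n x
    _ ≤ (2 * exp (-x)) ^ 2 * leftDecay x * gumbelRate n := by
      gcongr
      exacts [meanExceedances_le hn hx, exp_neg_meanExceedances_le_leftDecay hn hx,
        inv_natCast_le_gumbelRate hn]
    _ = 4 * gumbelRate n * (exp (-x) ^ 2 * leftDecay x) := by ring
    _ ≤ 4 * gumbelRate n * (leftDecayConst * exp (-|x|)) := by
      gcongr 4 * gumbelRate n * ?_
      exact exp_neg_sq_mul_leftDecay_le x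
    _ = _ := by ring

lemma abs_exp_neg_meanExceedances_sub_gumbelCDF_le (hn : 4 ≤ log (log n))
    (hx : -log n / 2 ≤ x) :
    |exp (-meanExceedances n x) - gumbelCDF x| ≤
      18 * leftDecayConst * gumbelRate n * ((1 + x ^ 2) * exp (-|x|)) := by
  have hrate := gumbelRate_pos hn
  have hD0 := leftDecay_pos x
  calc _ ≤ |meanExceedances n x - exp (-x)| * leftDecay x :=
        abs_exp_neg_sub_exp_neg_le (exp_neg_meanExceedances_le_leftDecay hn hx)
          (gumbelCDF_le_leftDecay x)
    _ ≤ 18 * (1 + x ^ 2) * gumbelRate n * exp (-x) * leftDecay x := by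
      gcongr
      exact abs_meanExceedances_sub_le hn hx
    _ = 18 * (1 + x ^ 2) * gumbelRate n * (exp (-x) * leftDecay x) := by ring
    _ ≤ 18 * (1 + x ^ 2) * gumbelRate n * (leftDecayConst * exp (-|x|)) := by
      gcongr 18 * (1 + x ^ 2) * gumbelRate n * ?_
      exact exp_neg_mul_leftDecay_le x
    _ = _ := by ring

lemma abs_Fmax_sub_gumbelCDF_le_of_ge (hn : 4 ≤ log (log n)) (hx : -log n / 2 ≤ x) :
    |Fmax n x - gumbelCDF x| ≤
      22 * leftDecayConst * gumbelRate n * ((1 + x ^ 2) * exp (-|x|)) := by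
  have hrate := gumbelRate_pos hn
  have hC := leftDecayConst_pos
  have hexcess : 0 ≤ 4 * leftDecayConst * gumbelRate n * exp (-|x|) * x ^ 2 := by positivity
  linarith [abs_sub_le (Fmax n x) (exp (-meanExceedances n x)) (gumbelCDF x),
    abs_Fmax_sub_exp_neg_meanExceedances_le hn hx,
    abs_exp_neg_meanExceedances_sub_gumbelCDF_le hn hx]

lemma abs_Fmax_sub_gumbelCDF_le_of_le (hn : 4 ≤ log (log n)) (hx : x ≤ -log n / 2) :
    |Fmax n x - gumbelCDF x| ≤ 2 * leftDecayConst * gumbelRate n * exp (-|x|) := by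
  have hL := log_natCast_pos_of_loglog hn
  have hrate := gumbelRate_pos hn
  have hone : 1 ≤ 2 * gumbelRate n * exp (-x) := by
    have hlog : log n ≤ 2 * exp (-x) := by linarith [add_one_le_exp (-x)]
    calc 1 = (log n)⁻¹ * log n := (inv_mul_cancel₀ hL.ne').symm
      _ ≤ gumbelRate n * (2 * exp (-x)) := by
        gcongr
        exact inv_log_le_gumbelRate hn
      _ = 2 * gumbelRate n * exp (-x) := by ring
  calc |Fmax n x - gumbelCDF x| ≤ leftDecay x :=
        abs_sub_le_of_nonneg_of_le (Fmax_nonneg n x) (Fmax_le_leftDecay hn hx) (exp_pos _).le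
          (gumbelCDF_le_leftDecay x)
    _ ≤ 2 * gumbelRate n * exp (-x) * leftDecay x :=
      le_mul_of_one_le_left (leftDecay_pos x).le hone
    _ ≤ 2 * gumbelRate n * (leftDecayConst * exp (-|x|)) := by
      rw [mul_assoc]
      gcongr 2 * gumbelRate n * ?_
      exact exp_neg_mul_leftDecay_le x
    _ = _ := by ring

lemma abs_Fmax_sub_gumbelCDF_le (hn : 4 ≤ log (log n)) (x : ℝ) :
    |Fmax n x - gumbelCDF x| ≤ 176 * leftDecayConst * gumbelRate n * exp (-|x| / 2) := by
  have hC := leftDecayConst_pos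
  have hrate := gumbelRate_pos hn
  have hpoly := one_add_sq_mul_exp_neg_abs_le x
  rcases le_total (-log n / 2) x with hx | hx
  · calc _ ≤ 22 * leftDecayConst * gumbelRate n * ((1 + x ^ 2) * exp (-|x|)) :=
          abs_Fmax_sub_gumbelCDF_le_of_ge hn hx
      _ ≤ 22 * leftDecayConst * gumbelRate n * (8 * exp (-|x| / 2)) := by gcongr
      _ = _ := by ring
  · refine (abs_Fmax_sub_gumbelCDF_le_of_le hn hx).trans ?_
    gcongr
    · norm_num
    · linarith [abs_nonneg x]

end Domination

section Limits

lemma tendsto_log_natCast_atTop : Tendsto (fun n : ℕ => log n) atTop atTop :=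
  tendsto_log_atTop.comp tendsto_natCast_atTop_atTop

lemma tendsto_loglog_natCast_atTop : Tendsto (fun n : ℕ => log (log n)) atTop atTop :=
  tendsto_log_atTop.comp tendsto_log_natCast_atTop

lemma eventually_four_le_loglog : ∀ᶠ n : ℕ in atTop, 4 ≤ log (log n) :=
  tendsto_loglog_natCast_atTop.eventually_ge_atTop 4

lemma tendsto_gumbelRate : Tendsto gumbelRate atTop (𝓝 0) := by
  have hratio : Tendsto (fun n : ℕ => log (log n) ^ 2 / log n) atTop (𝓝 0) :=
    (isLittleO_pow_log_id_atTop (n := 2)).tendsto_div_nhds_zero.comp tendsto_log_natCast_atTop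
  have hscaled := hratio.div_const 16
  rw [zero_div] at hscaled
  refine hscaled.congr fun n => ?_
  rw [gumbelRate, div_div, mul_comm]

lemma tendsto_sub_cSeq_div_loglog (x : ℝ) :
    Tendsto (fun n => (x - cSeq n) / log (log n)) atTop (𝓝 (-(1 / 2))) := by
  have hinv := tendsto_loglog_natCast_atTop.inv_tendsto_atTop
  have hlim := (hinv.const_mul (x - log (4 * π) / 2)).sub_const (1 / 2)
  rw [mul_zero, zero_sub] at hlim
  refine hlim.congr' ?_
  filter_upwards [eventually_four_le_loglog] with n hn
  have hl : log (log n) ≠ 0 := by linarith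
  rw [cSeq_eq (log_natCast_pos_of_loglog hn), Pi.inv_apply]
  field_simp
  ring

lemma tendsto_relShift_div_gumbelRate (x : ℝ) :
    Tendsto (fun n => relShift n x / gumbelRate n) atTop (𝓝 0) := by
  have hlim := ((tendsto_sub_cSeq_div_loglog x).const_mul 8).mul
    tendsto_loglog_natCast_atTop.inv_tendsto_atTop
  rw [mul_zero] at hlim
  refine hlim.congr' ?_
  filter_upwards [eventually_four_le_loglog] with n hn
  have hL := log_natCast_pos_of_loglog hn
  have hl : log (log n) ≠ 0 := by linarith
  rw [relShift, gumbelRate, Pi.inv_apply]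
  field_simp
  ring

lemma tendsto_log_mul_relShift_sq_div_gumbelRate (x : ℝ) :
    Tendsto (fun n : ℕ => log n * relShift n x ^ 2 / gumbelRate n) atTop (𝓝 1) := by
  have hlim := ((tendsto_sub_cSeq_div_loglog x).pow 2).const_mul 4
  rw [show (4 : ℝ) * (-(1 / 2)) ^ 2 = 1 by norm_num] at hlim
  refine hlim.congr' ?_
  filter_upwards [eventually_four_le_loglog] with n hn
  have hL := log_natCast_pos_of_loglog hn
  have hl : log (log n) ≠ 0 := by linarith
  rw [log_mul_relShift_sq hL, gumbelRate]
  field_simp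
  ring

lemma eventually_neg_log_div_two_le (x : ℝ) : ∀ᶠ n : ℕ in atTop, -log n / 2 ≤ x := by
  filter_upwards [tendsto_log_natCast_atTop.eventually_ge_atTop (-2 * x)] with n hn
  linarith

lemma eventually_gumbelRate_ne_zero : ∀ᶠ n in atTop, gumbelRate n ≠ 0 := by
  filter_upwards [eventually_four_le_loglog] with n hn
  exact (gumbelRate_pos hn).ne'

lemma tendsto_tailCorrection_sub_one_div (x : ℝ) :
    Tendsto (fun n => (tailCorrection n x - 1) / gumbelRate n) atTop (𝓝 (-1)) := by
  have hs := tendsto_log_mul_relShift_sq_div_gumbelRate x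
  have hd := tendsto_relShift_div_gumbelRate x
  have hs0 := tendsto_of_tendsto_sub_div (a := 0) tendsto_gumbelRate eventually_gumbelRate_ne_zero
    (by simpa using hs)
  have hd0 := tendsto_of_tendsto_sub_div (a := 0) tendsto_gumbelRate eventually_gumbelRate_ne_zero
    (by simpa using hd)
  have hexp : HasDerivAt (fun s : ℝ => exp (-s)) (-1) 0 :=
    (hasDerivAt_neg 0).exp.congr_deriv (by simp)
  have hinv : HasDerivAt (fun d : ℝ => (1 + d)⁻¹) (-1) 0 :=
    ((hasDerivAt_id 0).const_add 1).inv (by simp) |>.congr_deriv (by simp)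
  have hexp_lim := tendsto_sub_div_of_hasDerivAt hexp hs0 (by simpa using hs)
  have hinv_lim := tendsto_sub_div_of_hasDerivAt hinv hd0 (by simpa using hd)
  have hexp_one := hexp.continuousAt.tendsto.comp hs0
  simp only [neg_zero, exp_zero, add_zero, inv_one] at hexp_lim hinv_lim hexp_one
  simpa [tailCorrection, div_eq_mul_inv] using
    tendsto_mul_sub_one_div hexp_one hexp_lim hinv_lim

lemma tendsto_level_mul_millsRatio_sub_one_div (x : ℝ) :
    Tendsto (fun n => (level n x * millsRatio (level n x) - 1) / gumbelRate n) atTop (𝓝 0) := by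
  have hlower := (tendsto_loglog_natCast_atTop.inv_tendsto_atTop.pow 2).const_mul (-32)
  rw [zero_pow two_ne_zero, mul_zero] at hlower
  refine tendsto_of_tendsto_of_tendsto_of_le_of_le' hlower tendsto_const_nhds ?_ ?_ <;>
    filter_upwards [eventually_four_le_loglog, eventually_neg_log_div_two_le x] with n hn hx
  · have hL := log_natCast_pos_of_loglog hn
    have hl : log (log n) ≠ 0 := by linarith
    have hrate : -32 * (log (log n))⁻¹ ^ 2 * gumbelRate n = -(2 / log n) := by
      rw [gumbelRate]
      field_simp
      norm_num
    rw [Pi.inv_apply, le_div_iff₀ (gumbelRate_pos hn), hrate]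
    linarith [one_sub_two_div_log_le_mul_millsRatio hn hx]
  · exact div_nonpos_of_nonpos_of_nonneg
      (sub_nonpos.2 (mul_millsRatio_le_one (level_pos hn hx))) (gumbelRate_pos hn).le

lemma tendsto_meanExceedances_sub_div (x : ℝ) :
    Tendsto (fun n => (meanExceedances n x - exp (-x)) / gumbelRate n) atTop
      (𝓝 (-exp (-x))) := by
  have hcorrection := tendsto_tailCorrection_sub_one_div x
  have hone := tendsto_of_tendsto_sub_div tendsto_gumbelRate eventually_gumbelRate_ne_zero
    hcorrection
  have hlim := (tendsto_mul_sub_one_div hone hcorrection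
    (tendsto_level_mul_millsRatio_sub_one_div x)).const_mul (exp (-x))
  rw [add_zero, mul_neg_one] at hlim
  refine hlim.congr' ?_
  filter_upwards [eventually_four_le_loglog, eventually_neg_log_div_two_le x] with n hn hx
  rw [meanExceedances_eq hn hx]
  ring

lemma tendsto_exp_neg_meanExceedances_sub_Fmax_div (x : ℝ) :
    Tendsto (fun n => (exp (-meanExceedances n x) - Fmax n x) / gumbelRate n) atTop (𝓝 0) := by
  have hupper := (tendsto_loglog_natCast_atTop.inv_tendsto_atTop.pow 2).const_mul
    ((2 * exp (-x)) ^ 2)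
  rw [zero_pow two_ne_zero, mul_zero] at hupper
  refine tendsto_of_tendsto_of_tendsto_of_le_of_le' tendsto_const_nhds hupper ?_ ?_ <;>
    filter_upwards [eventually_four_le_loglog, eventually_neg_log_div_two_le x] with n hn hx
  · exact div_nonneg (sub_nonneg.2 (Fmax_le_exp_neg_meanExceedances n x)) (gumbelRate_pos hn).le
  · have hp0 := meanExceedances_nonneg n x
    rw [div_le_iff₀ (gumbelRate_pos hn), Pi.inv_apply]
    calc _ ≤ meanExceedances n x ^ 2 * exp (-meanExceedances n x) * (n : ℝ)⁻¹ :=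
          exp_neg_meanExceedances_sub_Fmax_le n x
      _ ≤ (2 * exp (-x)) ^ 2 * 1 * (gumbelRate n / log (log n) ^ 2) := by
        gcongr
        exacts [meanExceedances_le hn hx, exp_le_one_iff.2 (neg_nonpos.2 hp0),
          inv_natCast_le_gumbelRate_div hn]
      _ = _ := by ring

lemma tendsto_Fmax_sub_gumbelCDF_div (x : ℝ) :
    Tendsto (fun n => (Fmax n x - gumbelCDF x) / gumbelRate n) atTop (𝓝 (gumbelPDF x)) := by
  have hmean := tendsto_meanExceedances_sub_div x
  have hderiv : HasDerivAt (fun t : ℝ => exp (-t)) (-gumbelCDF x) (exp (-x)) :=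
    (hasDerivAt_neg _).exp.congr_deriv (mul_neg_one _)
  have hexp := tendsto_sub_div_of_hasDerivAt hderiv
    (tendsto_of_tendsto_sub_div tendsto_gumbelRate eventually_gumbelRate_ne_zero hmean) hmean
  have hlim := hexp.sub (tendsto_exp_neg_meanExceedances_sub_Fmax_div x)
  rw [neg_mul_neg, sub_zero, mul_comm, ← gumbelPDF_eq_mul_gumbelCDF] at hlim
  refine hlim.congr fun n => ?_
  rw [← sub_div, gumbelCDF, sub_sub_sub_cancel_left]

end Limits

/-- The `W₁` Wasserstein distance between the law of the normalized Gaussian maximum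
`Y_n` and the standard Gumbel distribution is `(log log n)²/(16 log n) · (1 + o(1))`. -/
theorem w1_gumbel_max_gaussian :
    Tendsto (fun n : ℕ =>
        (∫ x : ℝ, |Fmax n x - Real.exp (-Real.exp (-x))|) /
          ((Real.log (Real.log n)) ^ 2 / (16 * Real.log n)))
      atTop (nhds 1) := by
  have hlim : Tendsto (fun n => ∫ x, |Fmax n x - gumbelCDF x| / gumbelRate n) atTop
      (𝓝 (∫ x, gumbelPDF x)) := by
    refine tendsto_integral_filter_of_dominated_convergence
      (fun x => 176 * leftDecayConst * exp (-|x| / 2)) (.of_forall fun n => ?_) ?_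
      (integrable_exp_neg_abs_div_two.const_mul _) (.of_forall fun x => ?_)
    · exact (((monotone_Fmax n).measurable.sub measurable_gumbelCDF).abs.div_const
        _).aestronglyMeasurable
    · filter_upwards [eventually_four_le_loglog] with n hn
      refine .of_forall fun x => ?_
      have hrate := gumbelRate_pos hn
      rw [norm_of_nonneg (by positivity), div_le_iff₀ hrate, mul_right_comm]
      exact abs_Fmax_sub_gumbelCDF_le hn x
    · refine (abs_of_pos (exp_pos _) ▸ (tendsto_Fmax_sub_gumbelCDF_div x).abs).congr' ?_
      filter_upwards [eventually_four_le_loglog] with n hn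
      rw [abs_div, abs_of_pos (gumbelRate_pos hn)]
  simpa only [integral_div, integral_gumbelPDF, gumbelCDF, gumbelRate] using hlim
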